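/- arXiv:2407.15547 — 2 statements merged into one kernel-verified Lean document; each statement's English description precedes it below -/
import Mathlib

section
/- Let α < 0 and r > 0. For every τ ∈ V_{α,r} with τ(0) = τ'(0) = 0, with associated extension F of its Laplace transform, and every ε > 0, there exist a Schwartz function ψ on ℝ supported in [0,∞), numbers α' < α and r' > r, and an analytic extension G of L{ψ;·} to an open neighborhood of R̄_{α',r'}, such that sup_{x≥0}|τ'(x) − ψ'(x)| + sup_{s∈R̄_{α,r}} |F(s) − G(s)| < ε. That is, Y is dense in V⁰_{α,r}. -/
open Filter Set MeasureTheory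

/-- The Laplace transform `L{f;s} = ∫_0^∞ f(x) e^{-sx} dx`. -/
noncomputable def Laplace (f : ℝ → ℂ) (s : ℂ) : ℂ :=
  ∫ x in Set.Ioi (0 : ℝ), f x * Complex.exp (-(s * (x : ℂ)))

/-- The closed rectangle `R̄_{α,r} = {s : α ≤ Re s ≤ 1, |Im s| ≤ r}`. -/
def Rbar (α r : ℝ) : Set ℂ := {s : ℂ | α ≤ s.re ∧ s.re ≤ 1 ∧ |s.im| ≤ r}

/-- The open rectangle `R_{α,r} = {s : α < Re s < 1, |Im s| < r}`. -/
def Ropen (α r : ℝ) : Set ℂ := {s : ℂ | α < s.re ∧ s.re < 1 ∧ |s.im| < r}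

/-!
Extend `τ` by zero to a `C¹` function `T` on the line. For `η > 0` the function
`x ↦ e^{-ηx} T((1 + 2η)x)` is exponentially decaying, and its Laplace transform is
`s ↦ (1 + 2η)⁻¹ L{T; (s + η) / (1 + 2η)}`. The affine map `s ↦ (s + η) / (1 + 2η)` contracts a
rectangle strictly larger than `R̄_{α,r}` into `R_{α,r}`, so `F` provides an analytic extension
beyond `R̄_{α,r}`. Convolving with a mollifier supported in `(0, δ)` then yields a Schwartz function
that still vanishes on `(-∞, 0]`, and multiplies the transform by an entire function. Choosing
first `η` and then `δ` small makes both the derivative, uniformly on the line, and the transform,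
uniformly on `R̄_{α,r}`, as close to the original ones as desired.
-/

open Function
open ContinuousLinearMap (lsmul mul)
open scoped Convolution ContDiff Pointwise Topology SchwartzMap

lemma pow_mul_exp_neg_mul_le {c x : ℝ} (hc : 0 < c) (hx : 0 ≤ x) (k : ℕ) :
    x ^ k * Real.exp (-(c * x)) ≤ k.factorial / c ^ k := by
  have h := Real.pow_div_factorial_le_exp (c * x) (by positivity) k
  rw [div_le_iff₀ (by positivity), mul_pow] at h
  rw [Real.exp_neg, ← div_eq_mul_inv, div_le_div_iff₀ (by positivity) (by positivity)]
  linarith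

section Convolution

variable {E F G : Type*} [NormedAddCommGroup E] [NormedSpace ℝ E] [NormedAddCommGroup F]
  [NormedSpace ℝ F] [NormedAddCommGroup G] [NormedSpace ℝ G]

lemma iteratedDeriv_convolution_left (L : E →L[ℝ] F →L[ℝ] G) {n : ℕ} {f : ℝ → E} {g : ℝ → F}
    (hcf : HasCompactSupport f) (hf : ContDiff ℝ n f) (hg : LocallyIntegrable g) :
    iteratedDeriv n (f ⋆[L] g) = iteratedDeriv n f ⋆[L] g := by
  induction n generalizing f with
  | zero => simp only [iteratedDeriv_zero]
  | succ n ih =>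
    have hderiv : deriv (f ⋆[L] g) = deriv f ⋆[L] g := funext fun x =>
      (hcf.hasDerivAt_convolution_left L (hf.of_le (by simp)) hg x).deriv
    rw [iteratedDeriv_succ', iteratedDeriv_succ', hderiv]
    exact ih hcf.deriv (contDiff_succ_iff_deriv.1 hf).2.2

lemma hasDerivAt_convolution_of_contDiff_right (L : E →L[ℝ] F →L[ℝ] G) {f : ℝ → E} {g : ℝ → F}
    (hcf : HasCompactSupport f) (hf : ContDiff ℝ 1 f) (hg : ContDiff ℝ 1 g) (x : ℝ) :
    HasDerivAt (f ⋆[L] g) ((f ⋆[L] deriv g) x) x := by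
  have hg' : Continuous (deriv g) := hg.continuous_deriv_one
  have hparts : (deriv f ⋆[L] g) x = (f ⋆[L] deriv g) x := by
    have hderiv (t : ℝ) : HasDerivAt (fun t => g (x - t)) (-deriv g (x - t)) t :=
      ((hg.differentiable one_ne_zero (x - t)).hasDerivAt).comp_const_sub x t
    have h := integral_bilinear_hasDerivAt_right_eq_neg_left_of_integrable (L := L)
      (fun t _ => (hf.differentiable one_ne_zero t).hasDerivAt) (fun t _ => hderiv t)
      (by simpa using (hcf.convolutionExists_left L hf.continuous hg'.locallyIntegrable x).neg)
      (hcf.deriv.convolutionExists_left L hf.continuous_deriv_one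
        hg.continuous.locallyIntegrable x)
      (hcf.convolutionExists_left L hf.continuous hg.continuous.locallyIntegrable x)
    simp only [map_neg, integral_neg, neg_inj] at h
    exact h.symm
  exact hparts ▸ hcf.hasDerivAt_convolution_left L hf hg.continuous.locallyIntegrable x

lemma exists_norm_convolution_le_exp (L : E →L[ℝ] F →L[ℝ] G) {f : ℝ → E} {g : ℝ → F} {C c : ℝ}
    (hcf : HasCompactSupport f) (hf : Continuous f) (hc : 0 ≤ c)
    (hg : ∀ y, ‖g y‖ ≤ C * Real.exp (-(c * |y|))) :
    ∃ K, ∀ x, ‖(f ⋆[L] g) x‖ ≤ K * Real.exp (-(c * |x|)) := by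
  have hC : 0 ≤ C := by simpa using (norm_nonneg _).trans (hg 0)
  refine ⟨‖L‖ * C * ∫ t, ‖f t‖ * Real.exp (c * |t|), fun x => ?_⟩
  have hexp (t : ℝ) : Real.exp (-(c * |x - t|)) ≤ Real.exp (c * |t|) * Real.exp (-(c * |x|)) := by
    rw [← Real.exp_add, Real.exp_le_exp]
    nlinarith [abs_sub_abs_le_abs_sub x t]
  have hint : Integrable fun t => ‖f t‖ * Real.exp (c * |t|) :=
    (hf.norm.mul (by fun_prop)).integrable_of_hasCompactSupport hcf.norm.mul_right
  calc ‖(f ⋆[L] g) x‖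
      ≤ ∫ t, ‖L‖ * C * Real.exp (-(c * |x|)) * (‖f t‖ * Real.exp (c * |t|)) :=
        norm_integral_le_of_norm_le (hint.const_mul _) (Eventually.of_forall fun t => ?_)
    _ = ‖L‖ * C * (∫ t, ‖f t‖ * Real.exp (c * |t|)) * Real.exp (-(c * |x|)) := by
        rw [integral_const_mul]; ring
  calc ‖L (f t) (g (x - t))‖
      ≤ ‖L‖ * ‖f t‖ * ‖g (x - t)‖ := L.le_opNorm₂ _ _
    _ ≤ ‖L‖ * ‖f t‖ * (C * (Real.exp (c * |t|) * Real.exp (-(c * |x|)))) := by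
        gcongr
        exact (hg _).trans (by gcongr; exact hexp t)
    _ = ‖L‖ * C * Real.exp (-(c * |x|)) * (‖f t‖ * Real.exp (c * |t|)) := by ring

lemma exists_schwartzMap_eq_convolution (L : E →L[ℝ] F →L[ℝ] G) {f : ℝ → E} {g : ℝ → F} {C c : ℝ}
    (hcf : HasCompactSupport f) (hf : ContDiff ℝ ∞ f) (hgc : Continuous g) (hc : 0 < c)
    (hg : ∀ y, ‖g y‖ ≤ C * Real.exp (-(c * |y|))) :
    ∃ ψ : 𝓢(ℝ, G), ⇑ψ = f ⋆[L] g := by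
  have hgi : LocallyIntegrable g := hgc.locallyIntegrable
  refine ⟨⟨f ⋆[L] g, hcf.contDiff_convolution_left L hf hgi, fun k n => ?_⟩, rfl⟩
  have hfn : ContDiff ℝ n f := hf.of_le (mod_cast le_top)
  have hcfn : HasCompactSupport (iteratedDeriv n f) := by
    rw [iteratedDeriv_eq_equiv_comp]
    exact (hcf.iteratedFDeriv n).comp_left (map_zero _)
  obtain ⟨K, hK⟩ := exists_norm_convolution_le_exp L hcfn (hfn.continuous_iteratedDeriv' n) hc.le hg
  have hK0 : 0 ≤ K := by simpa using (norm_nonneg _).trans (hK 0)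
  refine ⟨K * (k.factorial / c ^ k), fun x => ?_⟩
  rw [norm_iteratedFDeriv_eq_norm_iteratedDeriv, iteratedDeriv_convolution_left L hcf hfn hgi,
    Real.norm_eq_abs]
  calc |x| ^ k * ‖(iteratedDeriv n f ⋆[L] g) x‖
      ≤ |x| ^ k * (K * Real.exp (-(c * |x|))) := by gcongr; exact hK x
    _ = K * (|x| ^ k * Real.exp (-(c * |x|))) := by ring
    _ ≤ K * (k.factorial / c ^ k) := by
        gcongr; exact pow_mul_exp_neg_mul_le hc (abs_nonneg x) k

lemma support_convolution_subset_Ici (L : E →L[ℝ] F →L[ℝ] G) {f : ℝ → E} {g : ℝ → F}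
    (hf : support f ⊆ Ici 0) (hg : support g ⊆ Ici 0) : support (f ⋆[L] g) ⊆ Ici 0 :=
  calc support (f ⋆[L] g) ⊆ support f + support g := support_convolution_subset L
    _ ⊆ Ici 0 + Ici 0 := add_subset_add hf hg
    _ ⊆ Ici 0 := by simpa using Ici_add_Ici_subset (0 : ℝ) 0

end Convolution

section LaplaceTransform

lemma laplace_eq_integral {f : ℝ → ℂ} (hf : support f ⊆ Ici 0) (s : ℂ) :
    Laplace f s = ∫ x, f x * Complex.exp (-(s * (x : ℂ))) := by
  rw [Laplace, ← integral_Ici_eq_integral_Ioi]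
  exact setIntegral_eq_integral_of_forall_compl_eq_zero fun x hx => by
    rw [notMem_support.1 fun h => hx (hf h), zero_mul]

lemma laplace_congr {f g : ℝ → ℂ} (hfg : EqOn f g (Ioi 0)) (s : ℂ) : Laplace f s = Laplace g s :=
  setIntegral_congr_fun measurableSet_Ioi fun x hx => by simp only [hfg hx]

lemma laplace_convolution {f g : ℝ → ℂ} {s : ℂ} (hf : support f ⊆ Ici 0) (hg : support g ⊆ Ici 0)
    (hfs : IntegrableOn (fun x : ℝ => f x * Complex.exp (-(s * x))) (Ioi 0))
    (hgs : IntegrableOn (fun x : ℝ => g x * Complex.exp (-(s * x))) (Ioi 0)) :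
    Laplace (f ⋆[mul ℝ ℂ] g) s = Laplace f s * Laplace g s := by
  have integrable {h : ℝ → ℂ} (hh : support h ⊆ Ici 0)
      (hhs : IntegrableOn (fun x : ℝ => h x * Complex.exp (-(s * x))) (Ioi 0)) :
      Integrable fun x : ℝ => h x * Complex.exp (-(s * x)) :=
    (integrableOn_iff_integrable_of_support_subset ((support_mul_subset_left _ _).trans hh)).1
      ((integrableOn_Ici_iff_integrableOn_Ioi (by simp)).2 hhs)
  rw [laplace_eq_integral (support_convolution_subset_Ici _ hf hg), laplace_eq_integral hf,
    laplace_eq_integral hg, ← ContinuousLinearMap.mul_apply' ℝ,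
    ← integral_convolution (mul ℝ ℂ) (integrable hf hfs) (integrable hg hgs)]
  congr 1 with x
  simp only [convolution_def, ContinuousLinearMap.mul_apply', ← integral_mul_const]
  congr 1 with t
  rw [mul_mul_mul_comm, ← Complex.exp_add]
  push_cast
  ring_nf

lemma convolution_lsmul_eq_convolution_mul (f : ℝ → ℝ) (g : ℝ → ℂ) :
    f ⋆[lsmul ℝ ℝ] g = (fun x => (f x : ℂ)) ⋆[mul ℝ ℂ] g := by
  ext x
  simp [convolution_def]

lemma norm_mul_exp_le_of_support_subset_Iic {f : ℝ → ℂ} {R t : ℝ} (hf : support f ⊆ Iic R)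
    (ht : 0 ≤ t) (s : ℂ) : ‖f t * Complex.exp (-(s * t))‖ ≤ ‖f t‖ * Real.exp (‖s‖ * R) := by
  by_cases hft : f t = 0
  · simp [hft]
  have htR : t ≤ R := hf hft
  rw [norm_mul, Complex.norm_exp]
  gcongr
  calc (-(s * (t : ℂ))).re ≤ ‖-(s * (t : ℂ))‖ := Complex.re_le_norm _
    _ = ‖s‖ * t := by rw [norm_neg, norm_mul, Complex.norm_real, Real.norm_of_nonneg ht]
    _ ≤ ‖s‖ * R := by gcongr

lemma integrableOn_mul_exp_of_support_subset_Iic {f : ℝ → ℂ} {R : ℝ}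
    (hfi : IntegrableOn f (Ioi 0)) (hf : support f ⊆ Iic R) (s : ℂ) :
    IntegrableOn (fun t : ℝ => f t * Complex.exp (-(s * t))) (Ioi 0) :=
  (hfi.norm.mul_const (Real.exp (‖s‖ * R))).mono'
    (hfi.aestronglyMeasurable.mul (by fun_prop))
    ((ae_restrict_mem measurableSet_Ioi).mono fun _ ht =>
      norm_mul_exp_le_of_support_subset_Iic hf (le_of_lt ht) s)

lemma differentiable_laplace_of_support_subset_Iic {f : ℝ → ℂ} {R : ℝ}
    (hfi : IntegrableOn f (Ioi 0)) (hf : support f ⊆ Iic R) : Differentiable ℂ (Laplace f) := by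
  intro s
  have hfit : IntegrableOn (fun t : ℝ => f t * (-t : ℂ)) (Ioi 0) := by
    refine (hfi.norm.mul_const R).mono' (hfi.aestronglyMeasurable.mul (by fun_prop))
      ((ae_restrict_mem measurableSet_Ioi).mono fun t ht => ?_)
    by_cases hft : f t = 0
    · simp [hft]
    rw [norm_mul, norm_neg, Complex.norm_real, Real.norm_of_nonneg (le_of_lt ht)]
    gcongr
    exact hf hft
  have hft : support (fun t : ℝ => f t * (-t : ℂ)) ⊆ Iic R := (support_mul_subset_left _ _).trans hf
  have hint := integrableOn_mul_exp_of_support_subset_Iic hfi hf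
  have hint' := integrableOn_mul_exp_of_support_subset_Iic hfit hft
  refine (hasDerivAt_integral_of_dominated_loc_of_deriv_le (μ := volume.restrict (Ioi 0))
    (F := fun z (t : ℝ) => f t * Complex.exp (-(z * t)))
    (F' := fun z (t : ℝ) => f t * (-t : ℂ) * Complex.exp (-(z * t)))
    (bound := fun t => ‖f t * (-t : ℂ)‖ * Real.exp ((‖s‖ + 1) * R))
    (Metric.ball_mem_nhds s one_pos) (Eventually.of_forall fun z => (hint z).aestronglyMeasurable)
    (hint s) (hint' s).aestronglyMeasurable ?_ (hfit.norm.mul_const _) ?_).2.differentiableAt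
  · refine (ae_restrict_mem measurableSet_Ioi).mono fun t ht z hz => ?_
    refine (norm_mul_exp_le_of_support_subset_Iic hft (le_of_lt ht) z).trans ?_
    by_cases hft0 : f t = 0
    · simp [hft0]
    have hR : 0 ≤ R := (le_of_lt ht).trans (hf hft0)
    gcongr
    linarith [norm_le_norm_add_norm_sub' z s, mem_ball_iff_norm.1 hz]
  · refine Eventually.of_forall fun t z _ => ?_
    simpa only [mul_assoc, mul_comm (Complex.exp _)] using
      (hasDerivAt_mul_const (t : ℂ)).fun_neg.cexp.const_mul (f t)

lemma integrableOn_mul_exp_of_norm_le_exp {f : ℝ → ℂ} {C c : ℝ} {s : ℂ} (hfc : Continuous f)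
    (hf : ∀ x, ‖f x‖ ≤ C * Real.exp (-(c * |x|))) (hs : -c < s.re) :
    IntegrableOn (fun x : ℝ => f x * Complex.exp (-(s * x))) (Ioi 0) := by
  refine ((integrableOn_exp_mul_Ioi (a := -(c + s.re)) (by linarith) 0).const_mul C).mono'
    (by fun_prop) ((ae_restrict_mem measurableSet_Ioi).mono fun x hx => ?_)
  calc ‖f x * Complex.exp (-(s * x))‖
      = ‖f x‖ * Real.exp (-(s.re * x)) := by simp [Complex.norm_exp]
    _ ≤ C * Real.exp (-(c * |x|)) * Real.exp (-(s.re * x)) := by gcongr; exact hf x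
    _ = C * Real.exp (-(c + s.re) * x) := by
        rw [abs_of_pos hx, mul_assoc, ← Real.exp_add]
        ring_nf

end LaplaceTransform

lemma tendstoUniformlyOn_of_continuousOn_uncurry {X Y E : Type*} [TopologicalSpace X]
    [TopologicalSpace Y] [UniformSpace E] {f : X → Y → E} {S : Set X} {K : Set Y} {p : X}
    (hK : IsCompact K) (hf : ContinuousOn (uncurry f) (S ×ˢ K)) (hp : p ∈ S) :
    TendstoUniformlyOn f (f p) (𝓝[S] p) K := fun _ hu =>
  let ⟨_, hv, hvu⟩ := hK.mem_uniformity_of_prod hf hp (symm_le_uniformity hu)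
  mem_of_superset hv fun _ hq _ hy => hvu _ hq _ hy

section Mollifier

/-- `φ` is a mollifier of width `δ` whose mass lies to the right of the origin, so that convolving
with it preserves supports contained in `[0, ∞)`. -/
structure IsCausalMollifier (δ : ℝ) (φ : ℝ → ℝ) : Prop where
  contDiff : ContDiff ℝ ∞ φ
  nonneg : ∀ x, 0 ≤ φ x
  support_subset : support φ ⊆ Ioo 0 δ
  integral_eq_one : ∫ x, φ x = 1

lemma exists_isCausalMollifier {δ : ℝ} (hδ : 0 < δ) : ∃ φ, IsCausalMollifier δ φ :=
  let b : ContDiffBump (δ / 2) := ⟨δ / 4, δ / 2, by linarith, by linarith⟩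
  ⟨b.normed volume, b.contDiff_normed, b.nonneg_normed,
    by rw [b.support_normed_eq, Real.ball_eq_Ioo]; simp [b], b.integral_normed⟩

lemma IsCausalMollifier.hasCompactSupport {δ : ℝ} {φ : ℝ → ℝ} (hφ : IsCausalMollifier δ φ) :
    HasCompactSupport φ :=
  HasCompactSupport.of_support_subset_isCompact isCompact_Icc
    (hφ.support_subset.trans Ioo_subset_Icc_self)

lemma IsCausalMollifier.support_subset_ball {δ : ℝ} {φ : ℝ → ℝ} (hφ : IsCausalMollifier δ φ) :
    support φ ⊆ Metric.ball 0 δ := by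
  rw [Real.ball_zero_eq_Ioo]
  exact fun x hx => ⟨by linarith [(hφ.support_subset hx).1, (hφ.support_subset hx).2],
    (hφ.support_subset hx).2⟩

lemma IsCausalMollifier.support_ofReal_subset {δ : ℝ} {φ : ℝ → ℝ} (hφ : IsCausalMollifier δ φ) :
    support (fun x => (φ x : ℂ)) ⊆ Ioo 0 δ :=
  (support_comp_subset Complex.ofReal_zero φ).trans hφ.support_subset

lemma IsCausalMollifier.integrable_ofReal {δ : ℝ} {φ : ℝ → ℝ} (hφ : IsCausalMollifier δ φ) :
    Integrable (fun x => (φ x : ℂ)) :=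
  (hφ.contDiff.continuous.integrable_of_hasCompactSupport hφ.hasCompactSupport).ofReal

lemma IsCausalMollifier.differentiable_laplace {δ : ℝ} {φ : ℝ → ℝ} (hφ : IsCausalMollifier δ φ) :
    Differentiable ℂ (Laplace fun t => (φ t : ℂ)) :=
  differentiable_laplace_of_support_subset_Iic hφ.integrable_ofReal.integrableOn
    (hφ.support_ofReal_subset.trans fun _ hx => le_of_lt hx.2)

lemma IsCausalMollifier.exists_schwartzMap {δ : ℝ} {φ : ℝ → ℝ} (hφ : IsCausalMollifier δ φ)
    {σ : ℝ → ℂ} {C c : ℝ} (hσ : ContDiff ℝ 1 σ) (hsupp : support σ ⊆ Ici 0) (hc : 0 < c)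
    (hdecay : ∀ x, ‖σ x‖ ≤ C * Real.exp (-(c * |x|))) :
    ∃ ψ : 𝓢(ℝ, ℂ), support ψ ⊆ Ici 0 ∧ deriv ψ = φ ⋆[lsmul ℝ ℝ] deriv σ ∧
      ∀ s : ℂ, -c < s.re → Laplace ψ s = Laplace (fun t => (φ t : ℂ)) s * Laplace σ s := by
  obtain ⟨ψ, hψ⟩ := exists_schwartzMap_eq_convolution (lsmul ℝ ℝ) hφ.hasCompactSupport
    hφ.contDiff hσ.continuous hc hdecay
  have hφ1 : ContDiff ℝ 1 φ := hφ.contDiff.of_le (mod_cast le_top)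
  have hφ0 : support (fun t => (φ t : ℂ)) ⊆ Ici 0 :=
    hφ.support_ofReal_subset.trans fun _ hx => le_of_lt hx.1
  refine ⟨ψ, ?_, funext fun x => ?_, fun s hs => ?_⟩
  · rw [hψ, convolution_lsmul_eq_convolution_mul]
    exact support_convolution_subset_Ici _ hφ0 hsupp
  · rw [hψ]
    exact (hasDerivAt_convolution_of_contDiff_right _ hφ.hasCompactSupport hφ1 hσ x).deriv
  · rw [hψ, convolution_lsmul_eq_convolution_mul]
    exact laplace_convolution hφ0 hsupp
      (integrableOn_mul_exp_of_support_subset_Iic hφ.integrable_ofReal.integrableOn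
        (hφ.support_ofReal_subset.trans fun _ hx => le_of_lt hx.2) s)
      (integrableOn_mul_exp_of_norm_le_exp hσ.continuous hdecay hs)

lemma eventually_dist_convolution_le {E : Type*} [NormedAddCommGroup E] [NormedSpace ℝ E]
    [CompleteSpace E] {g : ℝ → E} (hg : UniformContinuous g) {ε : ℝ} (hε : 0 < ε) :
    ∀ᶠ δ in 𝓝[>] (0 : ℝ), ∀ φ, IsCausalMollifier δ φ →
      ∀ x, dist ((φ ⋆[lsmul ℝ ℝ] g) x) (g x) ≤ ε := by
  obtain ⟨d, hd, hgd⟩ := Metric.uniformContinuous_iff.1 hg ε hε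
  filter_upwards [Ioo_mem_nhdsGT hd] with δ hδ φ hφ x
  exact dist_convolution_le hε.le hφ.support_subset_ball hφ.nonneg hφ.integral_eq_one
    hg.continuous.aestronglyMeasurable
    fun y hy => (hgd ((Metric.mem_ball.1 hy).trans hδ.2)).le

lemma eventually_dist_laplace_mul_le {K : Set ℂ} {G : ℂ → ℂ} (hK : IsCompact K)
    (hG : ContinuousOn G K) {ε : ℝ} (hε : 0 < ε) :
    ∀ᶠ δ in 𝓝[>] (0 : ℝ), ∀ φ, IsCausalMollifier δ φ →
      ∀ s ∈ K, dist (Laplace (fun t => (φ t : ℂ)) s * G s) (G s) ≤ ε := by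
  have hlim : TendstoUniformlyOn (fun (x : ℝ) s => Complex.exp (s * x) * G s)
      (fun s => Complex.exp (s * (0 : ℝ)) * G s) (𝓝[univ] 0) K := by
    refine tendstoUniformlyOn_of_continuousOn_uncurry hK ?_ (mem_univ 0)
    exact (by fun_prop : Continuous fun q : ℝ × ℂ => Complex.exp (q.2 * q.1)).continuousOn.mul
      (hG.comp continuousOn_snd fun q hq => hq.2)
  rw [nhdsWithin_univ] at hlim
  obtain ⟨d, hd, hKd⟩ := Metric.eventually_nhds_iff_ball.1
    (Metric.tendstoUniformlyOn_iff.1 hlim ε hε)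
  filter_upwards [Ioo_mem_nhdsGT hd] with δ hδ φ hφ s hs
  have hconv : Laplace (fun t => (φ t : ℂ)) s * G s =
      (φ ⋆[lsmul ℝ ℝ] fun x : ℝ => Complex.exp (s * x) * G s) 0 := by
    rw [laplace_eq_integral (hφ.support_ofReal_subset.trans fun _ hx => le_of_lt hx.1),
      convolution_def, ← integral_mul_const]
    simp [mul_assoc]
  rw [hconv]
  refine dist_convolution_le hε.le hφ.support_subset_ball hφ.nonneg hφ.integral_eq_one
    (by fun_prop) fun y hy => ?_
  simpa [dist_comm] using (hKd y (Metric.ball_subset_ball hδ.2.le hy) s hs).le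

lemma exists_isCausalMollifier_approx {E : Type*} [NormedAddCommGroup E] [NormedSpace ℝ E]
    [CompleteSpace E] {g : ℝ → E} (hg : UniformContinuous g) {K : Set ℂ} {G : ℂ → ℂ}
    (hK : IsCompact K) (hG : ContinuousOn G K) {ε : ℝ} (hε : 0 < ε) :
    ∃ δ φ, IsCausalMollifier δ φ ∧ (∀ x, dist ((φ ⋆[lsmul ℝ ℝ] g) x) (g x) ≤ ε) ∧
      ∀ s ∈ K, dist (Laplace (fun t => (φ t : ℂ)) s * G s) (G s) ≤ ε := by
  obtain ⟨δ, ⟨hgδ, hGδ⟩, hδ⟩ := ((eventually_dist_convolution_le hg hε).and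
    (eventually_dist_laplace_mul_le hK hG hε)).and self_mem_nhdsWithin |>.exists
  obtain ⟨φ, hφ⟩ := exists_isCausalMollifier hδ
  exact ⟨δ, φ, hφ, hgδ φ hφ, hGδ φ hφ⟩

end Mollifier

section CausalSublinear

variable {E : Type*} [NormedAddCommGroup E] {f g : ℝ → E}

/-- The continuous functions on the line that vanish on `(-∞, 0]` and grow sublinearly: the class
on which `dampDilate` below is controlled. It contains the causal `C¹` functions and their
derivatives. -/
structure IsCausalSublinear (f : ℝ → E) : Prop where
  continuous : Continuous f
  eq_zero_of_nonpos : ∀ x ≤ 0, f x = 0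
  isLittleO_id : f =o[atTop] (id : ℝ → ℝ)

lemma IsCausalSublinear.two_smul_sub [NormedSpace ℝ E] (hf : IsCausalSublinear f)
    (hg : IsCausalSublinear g) : IsCausalSublinear ((2 : ℝ) • f - g) where
  continuous := (hf.continuous.const_smul 2).sub hg.continuous
  eq_zero_of_nonpos x hx := by simp [hf.eq_zero_of_nonpos x hx, hg.eq_zero_of_nonpos x hx]
  isLittleO_id := (hf.isLittleO_id.const_smul_left 2).sub hg.isLittleO_id

lemma IsCausalSublinear.exists_norm_le_mul_add (hf : IsCausalSublinear f) {δ : ℝ} (hδ : 0 < δ) :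
    ∃ C, 0 ≤ C ∧ ∀ y ≥ 0, ‖f y‖ ≤ δ * y + C := by
  obtain ⟨X, hX⟩ := eventually_atTop.1 (hf.isLittleO_id.def hδ)
  obtain ⟨C, hC⟩ := (isCompact_Icc (a := 0) (b := X)).exists_bound_of_continuousOn
    hf.continuous.continuousOn
  refine ⟨max C 0, le_max_right _ _, fun y hy => ?_⟩
  rcases le_total X y with hXy | hyX
  · calc ‖f y‖ ≤ δ * ‖id y‖ := hX y hXy
      _ ≤ δ * y + max C 0 := by rw [id, Real.norm_of_nonneg hy]; simp
  · calc ‖f y‖ ≤ C := hC y ⟨hy, hyX⟩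
      _ ≤ δ * y + max C 0 := by linarith [le_max_left C 0, mul_nonneg hδ.le hy]

end CausalSublinear

lemma indicator_Ici_eq_zero_of_le {X M : Type*} [LinearOrder X] [Zero M] {f : X → M} {a x : X}
    (hfa : f a = 0) (hx : x ≤ a) : (Ici a).indicator f x = 0 := by
  rcases eq_or_lt_of_le hx with rfl | hlt
  · simp [hfa]
  · simp [hlt]

section CausalC1

variable {E : Type*} [NormedAddCommGroup E] [NormedSpace ℝ E] {f f' : ℝ → E}

/-- The `C¹` functions on the line that vanish on `(-∞, 0]` and whose derivative vanishes at
infinity: the extensions by zero of the functions `τ` as in `V_{α,r}` with `τ(0) = τ'(0) = 0`. -/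
structure IsCausalC1 (f : ℝ → E) : Prop where
  contDiff : ContDiff ℝ 1 f
  eq_zero_of_nonpos : ∀ x ≤ 0, f x = 0
  tendsto_deriv : Tendsto (deriv f) atTop (𝓝 0)

lemma IsCausalC1.support_subset (hf : IsCausalC1 f) : support f ⊆ Ici 0 := fun x hx =>
  le_of_not_ge fun h => hx (hf.eq_zero_of_nonpos x h)

lemma IsCausalC1.deriv_eq_zero_of_nonpos (hf : IsCausalC1 f) {x : ℝ} (hx : x ≤ 0) :
    deriv f x = 0 := by
  have hderiv := (hf.contDiff.differentiable one_ne_zero x).derivWithin (uniqueDiffOn_Iic 0 x hx)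
  rw [← hderiv, derivWithin_congr (s := Iic 0) hf.eq_zero_of_nonpos
    (hf.eq_zero_of_nonpos x hx), derivWithin_fun_const, Pi.zero_apply]

lemma IsCausalC1.uniformContinuous_deriv (hf : IsCausalC1 f) : UniformContinuous (deriv f) := by
  refine hf.contDiff.continuous_deriv_one.uniformContinuous_of_tendsto_cocompact (x := 0) ?_
  rw [cocompact_eq_atBot_atTop, tendsto_sup]
  exact ⟨tendsto_const_nhds.congr' <| (eventually_le_atBot 0).mono fun x hx =>
    (hf.deriv_eq_zero_of_nonpos hx).symm, hf.tendsto_deriv⟩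

lemma hasDerivAt_indicator_Ici {a : ℝ}
    (hf : ∀ x ∈ Ici a, HasDerivWithinAt f (f' x) (Ici a) x) (hfa : f a = 0) (hf'a : f' a = 0)
    (x : ℝ) : HasDerivAt ((Ici a).indicator f) ((Ici a).indicator f' x) x := by
  have hright (y : ℝ) (hy : y ∈ Ici a) :
      HasDerivWithinAt ((Ici a).indicator f) ((Ici a).indicator f' y) (Ici a) y := by
    rw [indicator_of_mem hy]
    exact (hf y hy).congr (fun z hz => indicator_of_mem hz f) (indicator_of_mem hy f)
  have hleft (y : ℝ) (hy : y ∈ Iic a) :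
      HasDerivWithinAt ((Ici a).indicator f) ((Ici a).indicator f' y) (Iic a) y := by
    rw [indicator_Ici_eq_zero_of_le hf'a hy]
    exact (hasDerivWithinAt_const y (Iic a) 0).congr
      (fun z hz => indicator_Ici_eq_zero_of_le hfa hz) (indicator_Ici_eq_zero_of_le hfa hy)
  rcases lt_trichotomy x a with h | rfl | h
  · exact (hleft x h.le).hasDerivAt (Iic_mem_nhds h)
  · simpa [Iic_union_Ici] using (hleft x self_mem_Iic).union (hright x self_mem_Ici)
  · exact (hright x h.le).hasDerivAt (Ici_mem_nhds h)

lemma exists_isCausalC1_eqOn_Ici (hf : ∀ x ∈ Ici 0, HasDerivWithinAt f (f' x) (Ici 0) x)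
    (hf' : ContinuousOn f' (Ici 0)) (hlim : Tendsto f' atTop (𝓝 0)) (hf0 : f 0 = 0)
    (hf'0 : f' 0 = 0) : ∃ T, IsCausalC1 T ∧ EqOn T f (Ici 0) ∧ EqOn (deriv T) f' (Ici 0) := by
  have hderiv := hasDerivAt_indicator_Ici hf hf0 hf'0
  have hderiv_eq : deriv ((Ici 0).indicator f) = (Ici 0).indicator f' :=
    funext fun x => (hderiv x).deriv
  refine ⟨(Ici 0).indicator f,
    ⟨contDiff_one_iff_deriv.2 ⟨fun x => (hderiv x).differentiableAt, ?_⟩,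
      fun x hx => indicator_Ici_eq_zero_of_le hf0 hx, ?_⟩,
    eqOn_indicator, hderiv_eq ▸ eqOn_indicator⟩
  · rw [hderiv_eq]
    exact continuous_indicator (by simp [hf'0]) (by rwa [isClosed_Ici.closure_eq])
  · rw [hderiv_eq]
    exact hlim.congr' ((eventually_ge_atTop 0).mono fun x hx => (indicator_of_mem hx f').symm)

lemma isLittleO_id_of_tendsto_deriv (hf : Differentiable ℝ f)
    (hlim : Tendsto (deriv f) atTop (𝓝 0)) : f =o[atTop] (id : ℝ → ℝ) := by
  refine Asymptotics.isLittleO_iff.2 fun c hc => ?_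
  obtain ⟨X, hX⟩ := eventually_atTop.1 <|
    (eventually_ge_atTop 0).and (hlim.norm.eventually_le_const (u := c / 2) (by simpa))
  filter_upwards [eventually_ge_atTop X, eventually_ge_atTop (2 * ‖f X‖ / c)] with y hy hyf
  have hX0 : 0 ≤ X := (hX X le_rfl).1
  have hmean : ‖f y - f X‖ ≤ c / 2 * (y - X) := by
    simpa [abs_of_nonneg (sub_nonneg.2 hy)] using
      (convex_Ici X).norm_image_sub_le_of_norm_deriv_le (fun z _ => hf z)
        (fun z hz => (hX z hz).2) self_mem_Ici hy
  rw [div_le_iff₀ hc] at hyf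
  rw [id, Real.norm_of_nonneg (hX0.trans hy)]
  nlinarith [norm_le_norm_add_norm_sub' (f y) (f X)]

lemma IsCausalC1.isCausalSublinear (hf : IsCausalC1 f) : IsCausalSublinear f where
  continuous := hf.contDiff.continuous
  eq_zero_of_nonpos := hf.eq_zero_of_nonpos
  isLittleO_id :=
    isLittleO_id_of_tendsto_deriv (hf.contDiff.differentiable one_ne_zero) hf.tendsto_deriv

lemma IsCausalC1.isCausalSublinear_deriv (hf : IsCausalC1 f) : IsCausalSublinear (deriv f) where
  continuous := hf.contDiff.continuous_deriv_one
  eq_zero_of_nonpos _ := hf.deriv_eq_zero_of_nonpos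
  isLittleO_id := ((Asymptotics.isLittleO_one_iff ℝ).2 hf.tendsto_deriv).trans_isBigO
    (Asymptotics.isLittleO_const_id_atTop 1).isBigO

end CausalC1

section DampDilate

variable {E : Type*} [NormedAddCommGroup E] [NormedSpace ℝ E] {f : ℝ → E} {η : ℝ}

/-- The dilation of `f` by the factor `1 + 2η`, damped by `e^{-ηx}`. The dilation is twice as
strong as the damping so that the half-plane `Re s ≤ 1` is moved into `Re s < 1` on the Laplace
side. -/
noncomputable def dampDilate (η : ℝ) (f : ℝ → E) (x : ℝ) : E :=
  Real.exp (-(η * x)) • f ((1 + 2 * η) * x)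

lemma dampDilate_eq_zero_of_nonpos (hf : ∀ x ≤ 0, f x = 0) (hη : 0 ≤ η) {x : ℝ} (hx : x ≤ 0) :
    dampDilate η f x = 0 := by
  rw [dampDilate, hf _ (mul_nonpos_of_nonneg_of_nonpos (by linarith) hx), smul_zero]

lemma norm_dampDilate (x : ℝ) :
    ‖dampDilate η f x‖ = Real.exp (-(η * x)) * ‖f ((1 + 2 * η) * x)‖ := by
  rw [dampDilate, norm_smul, Real.norm_of_nonneg (Real.exp_pos _).le]

lemma continuous_uncurry_dampDilate (hf : Continuous f) :
    Continuous (uncurry fun η => dampDilate η f) := by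
  unfold uncurry dampDilate
  fun_prop

lemma contDiff_dampDilate {n : ℕ∞ω} (hf : ContDiff ℝ n f) : ContDiff ℝ n (dampDilate η f) := by
  unfold dampDilate
  fun_prop

lemma deriv_dampDilate (hf : Differentiable ℝ f) :
    deriv (dampDilate η f) =
      dampDilate η (deriv f) + η • dampDilate η ((2 : ℝ) • deriv f - f) := by
  ext x
  have hexp : HasDerivAt (fun x => Real.exp (-(η * x))) (Real.exp (-(η * x)) * -η) x := by
    simpa using ((hasDerivAt_const_mul η).fun_neg (x := x)).exp
  have hcomp : HasDerivAt (fun x => f ((1 + 2 * η) * x))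
      ((1 + 2 * η) • deriv f ((1 + 2 * η) * x)) x :=
    (hf _).hasDerivAt.scomp x (hasDerivAt_const_mul _)
  refine (hexp.smul hcomp).deriv.trans ?_
  simp only [dampDilate, Pi.add_apply, Pi.smul_apply, Pi.sub_apply]
  module

lemma norm_dampDilate_le_of_norm_le_mul_add {δ C x : ℝ} (hη : 0 ≤ η)
    (hf : ∀ y ≥ 0, ‖f y‖ ≤ δ * y + C) (hx : 0 ≤ x) :
    ‖dampDilate η f x‖ ≤ Real.exp (-(η * x)) * (δ * ((1 + 2 * η) * x) + C) := by
  rw [norm_dampDilate]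
  gcongr
  exact hf _ (by positivity)

lemma tendstoUniformly_dampDilate (hf : Continuous f) (hf0 : ∀ x ≤ 0, f x = 0)
    (hlim : Tendsto f atTop (𝓝 0)) :
    TendstoUniformly (fun η => dampDilate η f) f (𝓝[>] 0) := by
  refine Metric.tendstoUniformly_iff.2 fun ε hε => ?_
  obtain ⟨X, hX⟩ := eventually_atTop.1 (hlim.norm.eventually_le_const (u := ε / 3) (by simpa))
  have hcompact : TendstoUniformlyOn (fun η => dampDilate η f) (dampDilate 0 f) (𝓝[univ] 0)
      (Icc 0 X) :=
    tendstoUniformlyOn_of_continuousOn_uncurry isCompact_Icc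
      (continuous_uncurry_dampDilate hf).continuousOn (mem_univ 0)
  rw [nhdsWithin_univ] at hcompact
  have hzero : dampDilate 0 f = f := by ext x; simp [dampDilate]
  filter_upwards [self_mem_nhdsWithin, nhdsWithin_le_nhds
    (Metric.tendstoUniformlyOn_iff.1 hcompact ε hε)] with η (hη : 0 < η) hnear x
  rcases le_total x 0 with hx0 | hx0
  · rwa [hf0 x hx0, dampDilate_eq_zero_of_nonpos hf0 hη.le hx0, dist_self]
  rcases le_total x X with hxX | hXx
  · rw [hzero] at hnear
    exact hnear x ⟨hx0, hxX⟩
  have hdilate : X ≤ (1 + 2 * η) * x := by nlinarith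
  have hexp : Real.exp (-(η * x)) ≤ 1 := Real.exp_le_one_iff.2 (by nlinarith)
  calc dist (f x) (dampDilate η f x) ≤ ‖f x‖ + ‖dampDilate η f x‖ := dist_le_norm_add_norm _ _
    _ ≤ ε / 3 + 1 * (ε / 3) := by
        rw [norm_dampDilate]
        gcongr
        exacts [hX x hXx, hX _ hdilate]
    _ < ε := by linarith

lemma IsCausalSublinear.tendstoUniformly_smul_dampDilate (hf : IsCausalSublinear f) :
    TendstoUniformly (fun η => η • dampDilate η f) 0 (𝓝[>] 0) := by
  refine Metric.tendstoUniformly_iff.2 fun ε hε => ?_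
  obtain ⟨C, hC0, hC⟩ := hf.exists_norm_le_mul_add (δ := ε / 6) (by positivity)
  have hsmall : ∀ᶠ η in 𝓝[>] (0 : ℝ), η * C < ε / 2 :=
    nhdsWithin_le_nhds <| (continuous_mul_const C).continuousAt.eventually_lt_const (by simpa)
  filter_upwards [Ioo_mem_nhdsGT one_pos, hsmall] with η ⟨hη0, hη1⟩ hηC x
  rw [Pi.zero_apply, dist_zero_left, Pi.smul_apply]
  rcases le_total x 0 with hx | hx
  · rwa [dampDilate_eq_zero_of_nonpos hf.eq_zero_of_nonpos hη0.le hx, smul_zero, norm_zero]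
  have hexp : η * x * Real.exp (-(η * x)) ≤ 1 := by
    simpa using pow_mul_exp_neg_mul_le one_pos (mul_nonneg hη0.le hx) 1
  have hexp_le : Real.exp (-(η * x)) ≤ 1 := Real.exp_le_one_iff.2 (by nlinarith)
  calc ‖η • dampDilate η f x‖
      ≤ η * (Real.exp (-(η * x)) * (ε / 6 * ((1 + 2 * η) * x) + C)) := by
        rw [norm_smul, Real.norm_of_nonneg hη0.le]
        gcongr
        exact norm_dampDilate_le_of_norm_le_mul_add hη0.le hC hx
    _ = ε / 6 * (1 + 2 * η) * (η * x * Real.exp (-(η * x))) + η * C * Real.exp (-(η * x)) := by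
        ring
    _ ≤ ε / 6 * (1 + 2 * 1) * 1 + η * C * 1 := by gcongr
    _ < ε := by linarith

lemma IsCausalSublinear.exists_norm_dampDilate_le_exp (hf : IsCausalSublinear f) (hη : 0 < η) :
    ∃ K, ∀ x, ‖dampDilate η f x‖ ≤ K * Real.exp (-(η / 2 * |x|)) := by
  obtain ⟨C, hC0, hC⟩ := hf.exists_norm_le_mul_add one_pos
  refine ⟨(1 + 2 * η) * (2 / η) + C, fun x => ?_⟩
  rcases le_total x 0 with hx | hx
  · rw [dampDilate_eq_zero_of_nonpos hf.eq_zero_of_nonpos hη.le hx, norm_zero]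
    positivity
  have hexp : x * Real.exp (-(η / 2 * x)) ≤ 2 / η := by
    simpa using pow_mul_exp_neg_mul_le (half_pos hη) hx 1
  have hexp_le : Real.exp (-(η / 2 * x)) ≤ 1 := Real.exp_le_one_iff.2 (by nlinarith)
  have hsplit : Real.exp (-(η * x)) = Real.exp (-(η / 2 * x)) * Real.exp (-(η / 2 * x)) := by
    rw [← Real.exp_add]; ring_nf
  rw [abs_of_nonneg hx]
  calc ‖dampDilate η f x‖
      ≤ Real.exp (-(η * x)) * (1 * ((1 + 2 * η) * x) + C) :=
        norm_dampDilate_le_of_norm_le_mul_add hη.le hC hx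
    _ = ((1 + 2 * η) * (x * Real.exp (-(η / 2 * x))) + C * Real.exp (-(η / 2 * x))) *
          Real.exp (-(η / 2 * x)) := by rw [hsplit]; ring
    _ ≤ ((1 + 2 * η) * (2 / η) + C * 1) * Real.exp (-(η / 2 * x)) := by gcongr
    _ = ((1 + 2 * η) * (2 / η) + C) * Real.exp (-(η / 2 * x)) := by rw [mul_one]

lemma IsCausalSublinear.tendsto_dampDilate_atTop (hf : IsCausalSublinear f) (hη : 0 < η) :
    Tendsto (dampDilate η f) atTop (𝓝 0) := by
  obtain ⟨K, hK⟩ := hf.exists_norm_dampDilate_le_exp hη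
  have hexp : Tendsto (fun x : ℝ => K * Real.exp (-(η / 2 * |x|))) atTop (𝓝 0) := by
    simpa using (Real.tendsto_exp_neg_atTop_nhds_zero.comp
      (tendsto_abs_atTop_atTop.const_mul_atTop (half_pos hη))).const_mul K
  exact squeeze_zero_norm hK hexp

lemma IsCausalC1.tendstoUniformly_deriv_dampDilate (hf : IsCausalC1 f) :
    TendstoUniformly (fun η => deriv (dampDilate η f)) (deriv f) (𝓝[>] 0) := by
  have hsublin := hf.isCausalSublinear_deriv
  have hsum := (tendstoUniformly_dampDilate hsublin.continuous hsublin.eq_zero_of_nonpos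
    hf.tendsto_deriv).add
      (hsublin.two_smul_sub hf.isCausalSublinear).tendstoUniformly_smul_dampDilate
  rw [add_zero] at hsum
  simp only [deriv_dampDilate (hf.contDiff.differentiable one_ne_zero)]
  exact hsum

lemma IsCausalC1.isCausalC1_dampDilate (hf : IsCausalC1 f) (hη : 0 < η) :
    IsCausalC1 (dampDilate η f) where
  contDiff := contDiff_dampDilate hf.contDiff
  eq_zero_of_nonpos _ := dampDilate_eq_zero_of_nonpos hf.eq_zero_of_nonpos hη.le
  tendsto_deriv := by
    have hsublin := hf.isCausalSublinear_deriv
    rw [deriv_dampDilate (hf.contDiff.differentiable one_ne_zero)]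
    have hsum := (hsublin.tendsto_dampDilate_atTop hη).add
      (((hsublin.two_smul_sub hf.isCausalSublinear).tendsto_dampDilate_atTop hη).const_smul η)
    rw [smul_zero, add_zero] at hsum
    exact hsum

end DampDilate

section Rectangle

variable {α r η : ℝ} {s : ℂ} {F : ℂ → ℂ}

lemma Ropen_subset_Rbar : Ropen α r ⊆ Rbar α r := fun _ hs => ⟨hs.1.le, hs.2.1.le, hs.2.2.le⟩

lemma Rbar_subset_Rbar {α' r' : ℝ} (hα : α' ≤ α) (hr : r ≤ r') : Rbar α r ⊆ Rbar α' r' :=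
  fun _ hs => ⟨hα.trans hs.1, hs.2.1, hs.2.2.trans hr⟩

lemma isOpen_Ropen (α r : ℝ) : IsOpen (Ropen α r) :=
  (isOpen_lt continuous_const Complex.continuous_re).inter
    ((isOpen_lt Complex.continuous_re continuous_const).inter
      (isOpen_lt Complex.continuous_im.abs continuous_const))

lemma isCompact_Rbar (α r : ℝ) : IsCompact (Rbar α r) := by
  have hprod : Rbar α r = Icc α 1 ×ℂ Icc (-r) r := by
    ext s
    simp [Rbar, Complex.mem_reProdIm, abs_le, and_assoc]
  exact hprod ▸ isCompact_Icc.reProdIm isCompact_Icc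

/-- The contraction with centre `1 / 2` and factor `(1 + 2η)⁻¹`: the substitution that
`dampDilate η` performs in the argument of the Laplace transform. -/
noncomputable def rectContraction (η : ℝ) (s : ℂ) : ℂ := ((1 + 2 * η)⁻¹ : ℝ) * (s + η)

lemma rectContraction_zero (s : ℂ) : rectContraction 0 s = s := by simp [rectContraction]

lemma rectContraction_re (η : ℝ) (s : ℂ) :
    (rectContraction η s).re = (1 + 2 * η)⁻¹ * (s.re + η) := by
  rw [rectContraction, Complex.re_ofReal_mul, Complex.add_re, Complex.ofReal_re]

lemma rectContraction_im (η : ℝ) (s : ℂ) : (rectContraction η s).im = (1 + 2 * η)⁻¹ * s.im := by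
  rw [rectContraction, Complex.im_ofReal_mul, Complex.add_im, Complex.ofReal_im, add_zero]

lemma differentiable_rectContraction (η : ℝ) : Differentiable ℂ (rectContraction η) := by
  unfold rectContraction
  fun_prop

lemma mapsTo_rectContraction_Ropen (hα : α < 0) (hr : 0 < r) (hη : 0 < η) :
    MapsTo (rectContraction η) (Rbar ((1 + η) * α) ((1 + η) * r)) (Ropen α r) := by
  rintro s ⟨hre, hre', him⟩
  have hscale : 0 < 1 + 2 * η := by positivity
  refine ⟨?_, ?_, ?_⟩
  · rw [rectContraction_re, lt_inv_mul_iff₀ hscale]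
    nlinarith
  · rw [rectContraction_re, inv_mul_lt_iff₀ hscale]
    linarith
  · rw [rectContraction_im, abs_mul, abs_of_pos (inv_pos.2 hscale), inv_mul_lt_iff₀ hscale]
    nlinarith

lemma mapsTo_rectContraction_Rbar (hα : α < 0) (hr : 0 < r) (hη : 0 ≤ η) :
    MapsTo (rectContraction η) (Rbar α r) (Rbar α r) := by
  rcases hη.eq_or_lt with rfl | hη
  · intro s hs
    rwa [rectContraction_zero]
  · exact ((mapsTo_rectContraction_Ropen hα hr hη).mono_left
      (Rbar_subset_Rbar (by nlinarith) (by nlinarith))).mono_right Ropen_subset_Rbar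

/-- The action of `dampDilate η` on Laplace transforms and their extensions, see
`laplace_dampDilate`. -/
noncomputable def contractedTransform (η : ℝ) (F : ℂ → ℂ) (s : ℂ) : ℂ :=
  ((1 + 2 * η)⁻¹ : ℝ) * F (rectContraction η s)

lemma contractedTransform_zero (F : ℂ → ℂ) : contractedTransform 0 F = F := by
  ext s
  simp [contractedTransform, rectContraction_zero]

lemma laplace_dampDilate (hη : 0 ≤ η) (f : ℝ → ℂ) :
    Laplace (dampDilate η f) = contractedTransform η (Laplace f) := by
  ext s
  have hscale : 0 < 1 + 2 * η := by positivity
  have hscale' : (1 + 2 * η : ℂ) ≠ 0 := mod_cast hscale.ne'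
  have hsubst := integral_comp_mul_left_Ioi
    (fun y : ℝ => f y * Complex.exp (-(rectContraction η s * y))) 0 hscale
  rw [mul_zero, Complex.real_smul] at hsubst
  rw [contractedTransform, Laplace, Laplace, ← hsubst]
  congr 1 with x
  have hexponent : -(rectContraction η s * ((1 + 2 * η) * x : ℝ)) = (-(η * x) : ℝ) - s * x := by
    rw [rectContraction]
    push_cast
    field_simp
    ring
  rw [hexponent, sub_eq_add_neg, Complex.exp_add, dampDilate, Complex.real_smul,
    Complex.ofReal_exp]
  ring

lemma contractedTransform_eq_laplace {f : ℝ → ℂ}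
    (hF : ∀ s ∈ Rbar α r, 0 < s.re → F s = Laplace f s) (hη : 0 ≤ η)
    (hs : rectContraction η s ∈ Rbar α r) (hre : 0 < s.re) :
    contractedTransform η F s = Laplace (dampDilate η f) s := by
  have hre' : 0 < (rectContraction η s).re := by
    rw [rectContraction_re]
    positivity
  rw [laplace_dampDilate hη, contractedTransform, contractedTransform, hF _ hs hre']

lemma differentiableOn_contractedTransform {U : Set ℂ} (hF : DifferentiableOn ℂ F U) :
    DifferentiableOn ℂ (contractedTransform η F) (rectContraction η ⁻¹' U) :=
  (hF.comp (differentiable_rectContraction η).differentiableOn (mapsTo_preimage _ _)).const_mul _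

lemma continuousOn_uncurry_contractedTransform (hα : α < 0) (hr : 0 < r)
    (hF : ContinuousOn F (Rbar α r)) :
    ContinuousOn (uncurry fun η => contractedTransform η F) (Ici 0 ×ˢ Rbar α r) := by
  have hscale : ContinuousOn (fun q : ℝ × ℂ => (((1 + 2 * q.1)⁻¹ : ℝ) : ℂ))
      (Ici 0 ×ˢ Rbar α r) := by
    refine Complex.continuous_ofReal.comp_continuousOn (ContinuousOn.inv₀ (by fun_prop) ?_)
    rintro q ⟨hq, -⟩
    have := mem_Ici.1 hq
    positivity
  exact hscale.mul (hF.comp (hscale.mul (by fun_prop))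
    fun q hq => mapsTo_rectContraction_Rbar hα hr hq.1 hq.2)

lemma continuousOn_contractedTransform (hα : α < 0) (hr : 0 < r) (hη : 0 ≤ η)
    (hF : ContinuousOn F (Rbar α r)) : ContinuousOn (contractedTransform η F) (Rbar α r) :=
  (continuousOn_uncurry_contractedTransform hα hr hF).uncurry_left η hη

lemma tendstoUniformlyOn_contractedTransform (hα : α < 0) (hr : 0 < r)
    (hF : ContinuousOn F (Rbar α r)) :
    TendstoUniformlyOn (fun η => contractedTransform η F) F (𝓝[>] 0) (Rbar α r) := by
  have hlim := tendstoUniformlyOn_of_continuousOn_uncurry (isCompact_Rbar α r)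
    (continuousOn_uncurry_contractedTransform hα hr hF) self_mem_Ici
  rw [contractedTransform_zero] at hlim
  exact fun u hu => nhdsWithin_mono 0 Ioi_subset_Ici_self (hlim u hu)

end Rectangle

lemma IsCausalC1.exists_dampDilate_approx {T : ℝ → ℂ} (hT : IsCausalC1 T) {α r : ℝ} {F : ℂ → ℂ}
    (hα : α < 0) (hr : 0 < r) (hF : ContinuousOn F (Rbar α r)) {ε : ℝ} (hε : 0 < ε) :
    ∃ η > 0, (∀ x, dist (deriv T x) (deriv (dampDilate η T) x) < ε) ∧
      ∀ s ∈ Rbar α r, dist (F s) (contractedTransform η F s) < ε := by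
  obtain ⟨η, hη, hη0⟩ :=
    ((Metric.tendstoUniformly_iff.1 hT.tendstoUniformly_deriv_dampDilate ε hε).and
      (Metric.tendstoUniformlyOn_iff.1 (tendstoUniformlyOn_contractedTransform hα hr hF) ε hε)).and
      self_mem_nhdsWithin |>.exists
  exact ⟨η, hη0, hη⟩

/-- `Y` is dense in `V⁰_{α,r}`: every `τ ∈ V_{α,r}` with `τ(0) = τ'(0) = 0` (with
extension `F`) can be approximated in `‖·‖_{α,r}` by Schwartz functions `ψ`
supported in `[0,∞)` whose Laplace transforms extend analytically to an open
neighborhood of `R̄_{α',r'}` for some `α' < α` and `r' > r`. -/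
theorem Y_dense_in_V0alphar
    (α r : ℝ) (hα : α < 0) (hr : 0 < r)
    (τ τ' : ℝ → ℂ) (F : ℂ → ℂ)
    (hder : ∀ x ∈ Set.Ici (0 : ℝ), HasDerivWithinAt τ (τ' x) (Set.Ici 0) x)
    (hcont : ContinuousOn τ' (Set.Ici 0))
    (hto0 : Tendsto τ' atTop (nhds 0))
    (hτ0 : τ 0 = 0) (hτ'0 : τ' 0 = 0)
    (hFan : DifferentiableOn ℂ F (Ropen α r))
    (hFcont : ContinuousOn F (Rbar α r))
    (hFeq : ∀ s ∈ Rbar α r, 0 < s.re → F s = Laplace τ s)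
    (ε : ℝ) (hε : 0 < ε) :
    ∃ ψ : SchwartzMap ℝ ℂ, (∀ x : ℝ, x < 0 → ψ x = 0) ∧
      ∃ α' r' : ℝ, α' < α ∧ r < r' ∧
        ∃ (U : Set ℂ) (G : ℂ → ℂ), IsOpen U ∧ Rbar α' r' ⊆ U ∧
          DifferentiableOn ℂ G U ∧
          (∀ s ∈ U, 0 < s.re → G s = Laplace (⇑ψ) s) ∧
          ∃ ε₁ ε₂ : ℝ, 0 ≤ ε₁ ∧ 0 ≤ ε₂ ∧ ε₁ + ε₂ < ε ∧
            (∀ x : ℝ, 0 ≤ x → ‖τ' x - deriv (⇑ψ) x‖ ≤ ε₁) ∧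
            (∀ s ∈ Rbar α r, ‖F s - G s‖ ≤ ε₂) := by
  have hε5 : 0 < ε / 5 := by positivity
  obtain ⟨T, hT, hTτ, hTτ'⟩ := exists_isCausalC1_eqOn_Ici hder hcont hto0 hτ0 hτ'0
  have hFT (s : ℂ) (hs : s ∈ Rbar α r) (hre : 0 < s.re) : F s = Laplace T s :=
    (hFeq s hs hre).trans (laplace_congr (hTτ.symm.mono Ioi_subset_Ici_self) s)
  obtain ⟨η, hη, hηT, hηF⟩ := hT.exists_dampDilate_approx hα hr hFcont hε5
  have hσ : IsCausalC1 (dampDilate η T) := hT.isCausalC1_dampDilate hη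
  obtain ⟨C, hC⟩ := hT.isCausalSublinear.exists_norm_dampDilate_le_exp hη
  obtain ⟨δ, φ, hφ, hφT, hφF⟩ := exists_isCausalMollifier_approx hσ.uniformContinuous_deriv
    (isCompact_Rbar α r) (continuousOn_contractedTransform hα hr hη.le hFcont) hε5
  obtain ⟨ψ, hψ, hψ', hψL⟩ :=
    hφ.exists_schwartzMap hσ.contDiff hσ.support_subset (half_pos hη) hC
  refine ⟨ψ, fun x hx => notMem_support.1 fun h => hx.not_ge (hψ h), (1 + η) * α, (1 + η) * r,
    by nlinarith, by nlinarith, rectContraction η ⁻¹' Ropen α r,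
    fun s => Laplace (fun t => (φ t : ℂ)) s * contractedTransform η F s,
    (isOpen_Ropen α r).preimage (differentiable_rectContraction η).continuous,
    mapsTo_rectContraction_Ropen hα hr hη,
    hφ.differentiable_laplace.differentiableOn.mul (differentiableOn_contractedTransform hFan),
    fun s hs hre => ?_, 2 * (ε / 5), 2 * (ε / 5), by positivity, by positivity, by linarith,
    fun x hx => ?_, fun s hs => ?_⟩
  · simp only [hψL s (by linarith),
      contractedTransform_eq_laplace hFT hη.le (Ropen_subset_Rbar hs) hre]
  · rw [← dist_eq_norm, ← hTτ' hx, hψ']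
    exact (dist_triangle_right _ _ (deriv (dampDilate η T) x)).trans (by linarith [hηT x, hφT x])
  · rw [← dist_eq_norm]
    exact (dist_triangle_right _ _ (contractedTransform η F s)).trans
      (by linarith [hηF s hs, hφF s hs])
end

section
/- Let β < α' < α < 0 and r' > r > 0, let τ be a Schwartz function on ℝ supported in [0,∞) such that L{τ;·} has an analytic extension to an open neighborhood of R̄_{α',r'}, and let 0 < h < −α'. Write F_h for the analytic extension of L{τ_h;·} (where τ_h(x) = e^{-hx}τ(x)), which is analytic on {Re s > −h} ∪ (an open neighborhood of −h + R̄_{α',r'}) and continuous on the closure {Re s ≥ −h}. Then for every s with Re s > 0 or s ∈ R̄_{α,r}, F_h(s) = (1/2πi) ∫_{Γ_h} F_h(ζ)/(s−ζ) dζ, where Γ_h is the contour consisting of: the vertical ray {−h+it : t ∈ (−∞,−r']} traversed upward, then from −h−ir' leftward along {σ − ir' : α' ≤ σ ≤ −h}, up along {α' + it : −r' ≤ t ≤ r'}, rightward along {σ + ir' : α' ≤ σ ≤ −h} to −h+ir', and finally the vertical ray {−h+it : t ∈ [r',∞)} traversed upward. Consequently τ_h(x) = (1/2πi) ∫_{Γ_h}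 F_h(ζ) e^{ζx} dζ for every x ≥ 0. -/
open Filter Set MeasureTheory

/-- The complex point `a + b i`. -/
noncomputable def cpt (a b : ℝ) : ℂ := (a : ℂ) + (b : ℂ) * Complex.I

/-- The (improper) contour integral `∫_{Γ_h} Φ(ζ) dζ` along the contour `Γ_h`
consisting of: the vertical ray `{−h+it : t ≤ −r'}` traversed upward, then from
`−h−ir'` leftward along `{σ−ir' : α' ≤ σ ≤ −h}`, up along `{α'+it : −r' ≤ t ≤ r'}`,
rightward along `{σ+ir' : α' ≤ σ ≤ −h}` to `−h+ir'`, and finally the vertical ray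
`{−h+it : t ≥ r'}` traversed upward. -/
noncomputable def contourIntegralGamma (Φ : ℂ → ℂ) (h α' r' : ℝ) : ℂ :=
    (∫ t in Set.Iic (-r'), Φ (cpt (-h) t) * Complex.I)
  - (∫ σ in Set.Icc α' (-h), Φ (cpt σ (-r')))
  + (∫ t in Set.Icc (-r') r', Φ (cpt α' t) * Complex.I)
  + (∫ σ in Set.Icc α' (-h), Φ (cpt σ r'))
  + (∫ t in Set.Ici r', Φ (cpt (-h) t) * Complex.I)

/-!
For `Re s > -h` neither integrand has a singularity between `Γ_h` and the line `Re ζ = -h`, so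
Cauchy's theorem moves the contour onto that line. There `F_h` is the Fourier transform of `τ`, and
Fourier inversion gives the formula for `τ_h`; taking the Laplace transform of the inversion
formula, with `L{e^{w·};z} = 1/(z-w)`, gives the formula for `F_h`. The contour integral is analytic
in `s` on the strip to the right of the indentation of `Γ_h`, so the identity theorem extends the
formula from `Re s > -h` to that strip.
-/

section

open Complex
open scoped Real FourierTransform

@[simp]
lemma cpt_re (a b : ℝ) : (cpt a b).re = a := by simp [cpt]

@[simp]
lemma cpt_im (a b : ℝ) : (cpt a b).im = b := by simp [cpt]

@[fun_prop]
lemma continuous_cpt {X : Type*} [TopologicalSpace X] {a b : X → ℝ} (ha : Continuous a)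
    (hb : Continuous b) : Continuous fun x => cpt (a x) (b x) := by
  unfold cpt
  fun_prop

lemma cpt_neg_add_self (h t : ℝ) : cpt (-h) t + h = t * I := by simp [cpt]

lemma convex_reProdIm {S T : Set ℝ} (hS : Convex ℝ S) (hT : Convex ℝ T) : Convex ℝ (S ×ℂ T) :=
  (hS.linear_preimage reLm).inter (hT.linear_preimage imLm)

lemma reProdIm_subset_union_re_pos {U : Set ℂ} {a α' r' : ℝ} (hU : Rbar α' r' ⊆ U)
    (ha : α' ≤ a) : Ici a ×ℂ Icc (-r') r' ⊆ U ∪ {s : ℂ | 0 < s.re} := by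
  rintro s ⟨hre : a ≤ s.re, him⟩
  rcases lt_or_ge 0 s.re with hpos | hnonpos
  · exact .inr hpos
  · exact .inl (hU ⟨ha.trans hre, hnonpos.trans zero_le_one, abs_le.2 him⟩)

lemma Rbar_subset_reProdIm {α α' r r' : ℝ} (hα : α' < α) (hr : r < r') :
    Rbar α r ⊆ Ioi α' ×ℂ Ioo (-r') r' :=
  fun _ hs => ⟨hα.trans_le hs.1, abs_lt.1 (hs.2.2.trans_lt hr)⟩

lemma laplace_mul_I_eq_fourier {τ : ℝ → ℂ} (hsupp : ∀ x < 0, τ x = 0) (t : ℝ) :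
    Laplace τ (t * I) = 𝓕 τ (t / (2 * π)) := by
  have phase (x : ℝ) : ((-2 * π * x * (t / (2 * π)) : ℝ) : ℂ) * I = -(t * I * x) := by
    have : (π : ℂ) ≠ 0 := ofReal_ne_zero.2 Real.pi_ne_zero
    push_cast
    field_simp
  rw [Real.fourier_real_eq_integral_exp_smul, Laplace, ← integral_Ici_eq_integral_Ioi,
    setIntegral_eq_integral_of_forall_compl_eq_zero
      fun x hx => by rw [hsupp x (not_le.1 hx), zero_mul]]
  simp only [phase, smul_eq_mul, mul_comm (τ _)]

lemma integrable_laplace_mul_I {τ : ℝ → ℂ} (hsupp : ∀ x < 0, τ x = 0)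
    (hfourier : Integrable (𝓕 τ)) : Integrable fun t : ℝ => Laplace τ (t * I) := by
  simpa only [laplace_mul_I_eq_fourier hsupp] using hfourier.comp_div Real.two_pi_pos.ne'

lemma integral_laplace_mul_I_mul_exp {τ : ℝ → ℂ} (hsupp : ∀ x < 0, τ x = 0)
    (hcont : Continuous τ) (hint : Integrable τ) (hfourier : Integrable (𝓕 τ)) (x : ℝ) :
    ∫ t : ℝ, Laplace τ (t * I) * exp (t * I * x) = 2 * π * τ x := by
  have phase (t : ℝ) : ((2 * π * (t / (2 * π) * x) : ℝ) : ℂ) * I = t * I * x := by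
    have : (π : ℂ) ≠ 0 := ofReal_ne_zero.2 Real.pi_ne_zero
    push_cast
    field_simp
  calc
    _ = ∫ t : ℝ, exp ((2 * π * (t / (2 * π) * x) : ℝ) * I) • 𝓕 τ (t / (2 * π)) := by
      simp only [laplace_mul_I_eq_fourier hsupp, phase, smul_eq_mul, mul_comm (𝓕 τ _)]
    _ = |2 * π| • ∫ v : ℝ, exp ((2 * π * (v * x) : ℝ) * I) • 𝓕 τ v :=
      Measure.integral_comp_div (fun v : ℝ => exp ((2 * π * (v * x) : ℝ) * I) • 𝓕 τ v) _
    _ = |2 * π| • 𝓕⁻ (𝓕 τ) x := by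
      simp only [Real.fourierInv_eq', RCLike.inner_apply, conj_trivial, mul_comm x]
    _ = 2 * π * τ x := by
      rw [hcont.fourierInv_fourier_eq hint hfourier, abs_of_pos Real.two_pi_pos, real_smul]
      push_cast
      rfl

lemma laplace_exp {w z : ℂ} (hwz : w.re < z.re) :
    Laplace (fun x => exp (w * x)) z = 1 / (z - w) := by
  have hre : (w - z).re < 0 := by simpa using hwz
  calc
    Laplace (fun x => exp (w * x)) z = ∫ x in Ioi (0 : ℝ), exp ((w - z) * x) := by
      simp only [Laplace, ← exp_add, sub_eq_add_neg, add_mul, neg_mul]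
    _ = 1 / (z - w) := by
      rw [integral_exp_mul_complex_Ioi hre, ofReal_zero, mul_zero, exp_zero, ← neg_sub z w,
        neg_div_neg_eq]

lemma integral_laplace_mul_I_div_sub {τ : ℝ → ℂ} (hsupp : ∀ x < 0, τ x = 0)
    (hcont : Continuous τ) (hint : Integrable τ) (hfourier : Integrable (𝓕 τ)) {z : ℂ}
    (hz : 0 < z.re) :
    ∫ t : ℝ, Laplace τ (t * I) / (z - t * I) = 2 * π * Laplace τ z := by
  have hprod : Integrable (fun p : ℝ × ℝ =>
      Laplace τ (p.1 * I) * exp (-z * p.2) * exp (p.1 * I * p.2))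
      (volume.prod (volume.restrict (Ioi 0))) := by
    have hexp : IntegrableOn (fun x : ℝ => exp (-z * x)) (Ioi 0) :=
      integrableOn_exp_mul_complex_Ioi (by simpa using hz) 0
    refine ((integrable_laplace_mul_I hsupp hfourier).mul_prod hexp).mul_bdd (c := 1)
      (Continuous.aestronglyMeasurable (by fun_prop)) (.of_forall fun p => ?_)
    simp [norm_exp]
  calc
    ∫ t : ℝ, Laplace τ (t * I) / (z - t * I)
      = ∫ t : ℝ, Laplace τ (t * I) * Laplace (fun x => exp (t * I * x)) z := by
      simp only [fun t : ℝ => laplace_exp (w := t * I) (z := z) (by simpa using hz), mul_one_div]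
    _ = ∫ t : ℝ, ∫ x in Ioi (0 : ℝ),
          Laplace τ (t * I) * exp (-z * x) * exp (t * I * x) := by
      simp only [Laplace, ← integral_const_mul, neg_mul, mul_assoc, mul_comm (exp (-_))]
    _ = ∫ x in Ioi (0 : ℝ), ∫ t : ℝ,
          Laplace τ (t * I) * exp (-z * x) * exp (t * I * x) := integral_integral_swap hprod
    _ = ∫ x in Ioi (0 : ℝ), 2 * π * τ x * exp (-z * x) := by
      simp only [mul_right_comm _ (exp (-z * _)), integral_mul_const,
        integral_laplace_mul_I_mul_exp hsupp hcont hint hfourier]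
    _ = 2 * π * Laplace τ z := by
      simp only [Laplace, ← integral_const_mul, neg_mul, mul_assoc]

lemma contourIntegralGamma_eq_integral_line {Φ : ℂ → ℂ} {h α' r' : ℝ} (hα' : α' ≤ -h)
    (hr' : 0 ≤ r') (hΦ : DifferentiableOn ℂ Φ (Icc α' (-h) ×ℂ Icc (-r') r'))
    (hline : Integrable fun t : ℝ => Φ (cpt (-h) t)) :
    contourIntegralGamma Φ h α' r' = (∫ t : ℝ, Φ (cpt (-h) t)) * I := by
  have hneg : -r' ≤ r' := neg_le_self hr'
  have hrect :
      (∫ σ in Ioc α' (-h), Φ (cpt σ (-r'))) - (∫ σ in Ioc α' (-h), Φ (cpt σ r'))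
        + I * (∫ t in Ioc (-r') r', Φ (cpt (-h) t))
        - I * (∫ t in Ioc (-r') r', Φ (cpt α' t)) = 0 := by
    have := integral_boundary_rect_eq_zero_of_differentiableOn Φ (cpt α' (-r')) (cpt (-h) r')
      (by simpa only [cpt_re, cpt_im, uIcc_of_le hα', uIcc_of_le hneg] using hΦ)
    simpa only [cpt_re, cpt_im, smul_eq_mul, intervalIntegral.integral_of_le hα',
      intervalIntegral.integral_of_le hneg] using! this
  have hsplit : ∫ t : ℝ, Φ (cpt (-h) t) = (∫ t in Iic (-r'), Φ (cpt (-h) t)) +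
      ((∫ t in Ioc (-r') r', Φ (cpt (-h) t)) + ∫ t in Ioi r', Φ (cpt (-h) t)) := by
    rw [← intervalIntegral.integral_of_le hneg,
      intervalIntegral.integral_interval_add_Ioi hline.integrableOn hline.integrableOn,
      intervalIntegral.integral_Iic_add_Ioi hline.integrableOn hline.integrableOn]
  simp only [contourIntegralGamma, integral_Icc_eq_integral_Ioc, integral_Ici_eq_integral_Ioi,
    integral_mul_const, hsplit]
  linear_combination -hrect

lemma integrable_div_of_le_norm {X : Type*} [MeasurableSpace X] {μ : Measure X} {g k : X → ℂ}
    {δ : ℝ} (hg : Integrable g μ) (hk : AEStronglyMeasurable k μ) (hδ : 0 < δ)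
    (hle : ∀ᵐ t ∂μ, δ ≤ ‖k t‖) : Integrable (fun t => g t / k t) μ := by
  simp only [div_eq_mul_inv]
  refine hg.mul_bdd (c := δ⁻¹) hk.inv₀ ?_
  filter_upwards [hle] with t ht
  rw [norm_inv]
  exact inv_anti₀ hδ ht

lemma differentiableAt_integral_div_sub {X : Type*} [MeasurableSpace X] {μ : Measure X}
    {g γ : X → ℂ} {s : ℂ} {δ : ℝ} (hg : Integrable g μ) (hγ : AEStronglyMeasurable γ μ)
    (hδ : 0 < δ) (hle : ∀ᵐ t ∂μ, δ ≤ ‖s - γ t‖) :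
    DifferentiableAt ℂ (fun s => ∫ t, g t / (s - γ t) ∂μ) s := by
  have hmeas (w : ℂ) : AEStronglyMeasurable (fun t => w - γ t) μ :=
    aestronglyMeasurable_const.sub hγ
  have hball : ∀ᵐ t ∂μ, ∀ w ∈ Metric.ball s (δ / 2), δ / 2 ≤ ‖w - γ t‖ := by
    filter_upwards [hle] with t ht w hw
    rw [mem_ball_iff_norm'] at hw
    linarith [norm_sub_le_norm_sub_add_norm_sub s w (γ t)]
  refine (hasDerivAt_integral_of_dominated_loc_of_deriv_le (F := fun s t => g t / (s - γ t))
    (F' := fun s t => -g t / (s - γ t) ^ 2) (bound := fun t => ‖g t‖ / (δ / 2) ^ 2)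
    (Metric.ball_mem_nhds s (half_pos hδ))
    (.of_forall fun w => hg.aestronglyMeasurable.div₀ (hmeas w))
    (integrable_div_of_le_norm hg (hmeas s) hδ hle)
    (hg.aestronglyMeasurable.neg.div₀ ((hmeas s).pow 2)) ?_ (hg.norm.div_const _)
    ?_).2.differentiableAt
  · filter_upwards [hball] with t ht w hw
    rw [norm_div, norm_neg, norm_pow]
    gcongr
    exact ht w hw
  · filter_upwards [hball] with t ht w hw
    have hne : w - γ t ≠ 0 := norm_pos_iff.1 ((half_pos hδ).trans_le (ht w hw))
    simpa using! (hasDerivAt_const w (g t)).fun_div ((hasDerivAt_id w).sub_const (γ t)) hne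

lemma abs_im_sub_le_norm_sub_cpt (s : ℂ) (a b : ℝ) : |s.im - b| ≤ ‖s - cpt a b‖ := by
  simpa using abs_im_le_norm (s - cpt a b)

lemma integrableOn_horizontal {Φ : ℂ → ℂ} {a b y : ℝ} {T : Set ℝ}
    (hΦ : ContinuousOn Φ (Icc a b ×ℂ T)) (hy : y ∈ T) :
    IntegrableOn (fun σ : ℝ => Φ (cpt σ y)) (Icc a b) :=
  (hΦ.comp (by fun_prop) fun σ hσ => by simpa [mem_reProdIm] using ⟨hσ, hy⟩).integrableOn_Icc

lemma integrableOn_vertical {Φ : ℂ → ℂ} {a b x : ℝ} {S : Set ℝ}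
    (hΦ : ContinuousOn Φ (S ×ℂ Icc a b)) (hx : x ∈ S) :
    IntegrableOn (fun t : ℝ => Φ (cpt x t)) (Icc a b) :=
  (hΦ.comp (by fun_prop) fun t ht => by simpa [mem_reProdIm] using ⟨hx, ht⟩).integrableOn_Icc

lemma differentiableOn_contourIntegralGamma_div_sub {Φ : ℂ → ℂ} {h α' r' : ℝ} (hα' : α' ≤ -h)
    (hΦ : ContinuousOn Φ (Icc α' (-h) ×ℂ Icc (-r') r'))
    (hline : Integrable fun t : ℝ => Φ (cpt (-h) t)) :
    DifferentiableOn ℂ (fun s => contourIntegralGamma (fun ζ => Φ ζ / (s - ζ)) h α' r')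
      (Ioi α' ×ℂ Ioo (-r') r') := by
  rintro s ⟨hre : α' < s.re, him_lower : -r' < s.im, him_upper : s.im < r'⟩
  have hbelow (a t : ℝ) (ht : t ≤ -r') : s.im + r' ≤ ‖s - cpt a t‖ := by
    linarith [le_abs_self (s.im - t), abs_im_sub_le_norm_sub_cpt s a t]
  have habove (a t : ℝ) (ht : r' ≤ t) : r' - s.im ≤ ‖s - cpt a t‖ := by
    linarith [neg_le_abs (s.im - t), abs_im_sub_le_norm_sub_cpt s a t]
  have hright (t : ℝ) : s.re - α' ≤ ‖s - cpt α' t‖ := by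
    simpa using re_le_norm (s - cpt α' t)
  have hmeas {S : Set ℝ} {γ : ℝ → ℂ} (hγ : Continuous γ) :
      AEStronglyMeasurable γ (volume.restrict S) := hγ.aestronglyMeasurable
  have hneg : -r' ≤ r' := (him_lower.trans him_upper).le
  have hpos_below : 0 < s.im + r' := by linarith
  have hpos_above : 0 < r' - s.im := by linarith
  simp only [contourIntegralGamma, integral_mul_const]
  refine DifferentiableAt.differentiableWithinAt <|
    (((((?lowerRay : DifferentiableAt ℂ _ s).mul_const I).sub ?bottom).add
      ((?left : DifferentiableAt ℂ _ s).mul_const I)).add ?top).add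
      ((?upperRay : DifferentiableAt ℂ _ s).mul_const I)
  case lowerRay =>
    refine differentiableAt_integral_div_sub hline.integrableOn (hmeas (by fun_prop)) hpos_below ?_
    filter_upwards [ae_restrict_mem measurableSet_Iic] with t ht using hbelow _ t ht
  case bottom =>
    exact differentiableAt_integral_div_sub (integrableOn_horizontal hΦ ⟨le_rfl, hneg⟩)
      (hmeas (by fun_prop)) hpos_below (.of_forall fun σ => hbelow σ _ le_rfl)
  case left =>
    exact differentiableAt_integral_div_sub (integrableOn_vertical hΦ ⟨le_rfl, hα'⟩)
      (hmeas (by fun_prop)) (sub_pos.2 hre) (.of_forall hright)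
  case top =>
    exact differentiableAt_integral_div_sub (integrableOn_horizontal hΦ ⟨hneg, le_rfl⟩)
      (hmeas (by fun_prop)) hpos_above (.of_forall fun σ => habove σ _ le_rfl)
  case upperRay =>
    refine differentiableAt_integral_div_sub hline.integrableOn (hmeas (by fun_prop)) hpos_above ?_
    filter_upwards [ae_restrict_mem measurableSet_Ici] with t ht using habove _ t ht

lemma eq_contourIntegralGamma_of_mem_strip {Φ : ℂ → ℂ} {h α' r' : ℝ} (hα' : α' ≤ -h)
    (hΦ : DifferentiableOn ℂ Φ (Ici α' ×ℂ Icc (-r') r'))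
    (hline : Integrable fun t : ℝ => Φ (cpt (-h) t))
    (heq : ∀ s : ℂ, -h < s.re →
      Φ s = (2 * π * I)⁻¹ * contourIntegralGamma (fun ζ => Φ ζ / (s - ζ)) h α' r')
    {s : ℂ} (hs : s ∈ Ioi α' ×ℂ Ioo (-r') r') :
    Φ s = (2 * π * I)⁻¹ * contourIntegralGamma (fun ζ => Φ ζ / (s - ζ)) h α' r' := by
  have hopen : IsOpen (Ioi α' ×ℂ Ioo (-r') r') := isOpen_Ioi.reProdIm isOpen_Ioo
  have hconn : IsPreconnected (Ioi α' ×ℂ Ioo (-r') r') :=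
    (convex_reProdIm (convex_Ioi α') (convex_Ioo (-r') r')).isPreconnected
  have hΦ_strip : DifferentiableOn ℂ Φ (Ioi α' ×ℂ Ioo (-r') r') :=
    hΦ.mono (inter_subset_inter (preimage_mono Ioi_subset_Ici_self)
      (preimage_mono Ioo_subset_Icc_self))
  have hΦ_rect : ContinuousOn Φ (Icc α' (-h) ×ℂ Icc (-r') r') :=
    hΦ.continuousOn.mono (inter_subset_inter_left _ (preimage_mono Icc_subset_Ici_self))
  have hΓ := (differentiableOn_contourIntegralGamma_div_sub hα' hΦ_rect hline).const_mul
    (2 * π * I)⁻¹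
  have hz₀ : cpt (-h + 1) s.im ∈ Ioi α' ×ℂ Ioo (-r') r' :=
    ⟨by simpa using by linarith, by simpa using hs.2⟩
  have hnear : {w : ℂ | -h < w.re} ∈ nhds (cpt (-h + 1) s.im) :=
    (isOpen_lt continuous_const continuous_re).mem_nhds (by simp)
  exact (hΦ_strip.analyticOnNhd hopen).eqOn_of_preconnected_of_eventuallyEq
    (hΓ.analyticOnNhd hopen) hconn hz₀ (mem_of_superset hnear heq) hs

section ShiftedTransform

variable {τ : ℝ → ℂ} {F : ℂ → ℂ} {h α' r' : ℝ}

lemma differentiableOn_comp_add_ofReal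
    (hF : DifferentiableOn ℂ F (Ici (α' + h) ×ℂ Icc (-r') r')) :
    DifferentiableOn ℂ (fun ζ => F (ζ + h)) (Ici α' ×ℂ Icc (-r') r') :=
  hF.comp (by fun_prop) fun ζ hζ => by simpa [mem_reProdIm] using hζ

lemma apply_cpt_neg_add_eq_laplace (hFeq : ∀ s : ℂ, 0 ≤ s.re → F s = Laplace τ s) (t : ℝ) :
    F (cpt (-h) t + h) = Laplace τ (t * I) := by
  rw [cpt_neg_add_self]
  exact hFeq _ (by simp)

lemma eq_contourIntegralGamma_of_neg_lt_re (hsupp : ∀ x < 0, τ x = 0) (hcont : Continuous τ)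
    (hint : Integrable τ) (hfourier : Integrable (𝓕 τ))
    (hFeq : ∀ s : ℂ, 0 ≤ s.re → F s = Laplace τ s)
    (hF : DifferentiableOn ℂ (fun ζ => F (ζ + h)) (Icc α' (-h) ×ℂ Icc (-r') r'))
    (hα' : α' ≤ -h) (hr' : 0 ≤ r') {s : ℂ} (hs : -h < s.re) :
    F (s + h) = (2 * π * I)⁻¹ *
      contourIntegralGamma (fun ζ => F (ζ + h) / (s - ζ)) h α' r' := by
  have hsh : 0 < (s + h).re := by simpa using neg_lt_iff_pos_add.1 hs
  have hne (ζ : ℂ) (hζ : ζ ∈ Icc α' (-h) ×ℂ Icc (-r') r') : s - ζ ≠ 0 :=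
    sub_ne_zero.2 fun hsζ => (hζ.1.2.trans_lt hs).ne (congrArg re hsζ.symm)
  have hline (t : ℝ) : F (cpt (-h) t + h) / (s - cpt (-h) t) =
      Laplace τ (t * I) / (s + h - t * I) := by
    rw [apply_cpt_neg_add_eq_laplace hFeq, ← cpt_neg_add_self h t, add_sub_add_right_eq_sub]
  rw [contourIntegralGamma_eq_integral_line hα' hr' (hF.fun_div (by fun_prop) hne)]
  · simp only [hline, integral_laplace_mul_I_div_sub hsupp hcont hint hfourier hsh,
      ← hFeq _ hsh.le]
    field_simp
  · simp only [hline]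
    exact integrable_div_of_le_norm (integrable_laplace_mul_I hsupp hfourier)
      (Continuous.aestronglyMeasurable (by fun_prop)) hsh
      (.of_forall fun t => by simpa using re_le_norm (s + h - t * I))

lemma exp_mul_eq_contourIntegralGamma (hsupp : ∀ x < 0, τ x = 0) (hcont : Continuous τ)
    (hint : Integrable τ) (hfourier : Integrable (𝓕 τ))
    (hFeq : ∀ s : ℂ, 0 ≤ s.re → F s = Laplace τ s)
    (hF : DifferentiableOn ℂ (fun ζ => F (ζ + h)) (Icc α' (-h) ×ℂ Icc (-r') r'))
    (hα' : α' ≤ -h) (hr' : 0 ≤ r') (x : ℝ) :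
    exp (-(h * x)) * τ x = (2 * π * I)⁻¹ *
      contourIntegralGamma (fun ζ => F (ζ + h) * exp (ζ * x)) h α' r' := by
  have hline (t : ℝ) : F (cpt (-h) t + h) * exp (cpt (-h) t * x) =
      exp (-(h * x)) * (Laplace τ (t * I) * exp (t * I * x)) := by
    rw [apply_cpt_neg_add_eq_laplace hFeq, mul_left_comm, ← exp_add, ← cpt_neg_add_self h t]
    ring_nf
  rw [contourIntegralGamma_eq_integral_line hα' hr' (hF.fun_mul (by fun_prop))]
  · simp only [hline, integral_const_mul,
      integral_laplace_mul_I_mul_exp hsupp hcont hint hfourier]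
    field_simp
  · simp only [hline]
    exact ((integrable_laplace_mul_I hsupp hfourier).mul_bdd (c := 1)
      (Continuous.aestronglyMeasurable (by fun_prop))
      (.of_forall fun t => by simp [norm_exp])).const_mul _

theorem contour_integral_representation_general (hsupp : ∀ x < 0, τ x = 0)
    (hcont : Continuous τ) (hint : Integrable τ) (hfourier : Integrable (𝓕 τ))
    (hFeq : ∀ s : ℂ, 0 ≤ s.re → F s = Laplace τ s)
    (hF : DifferentiableOn ℂ F (Ici (α' + h) ×ℂ Icc (-r') r'))
    (hα' : α' ≤ -h) (hr' : 0 ≤ r') :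
    (∀ s : ℂ, -h < s.re ∨ s ∈ Ioi α' ×ℂ Ioo (-r') r' →
      F (s + h) = (2 * π * I)⁻¹ *
        contourIntegralGamma (fun ζ => F (ζ + h) / (s - ζ)) h α' r') ∧
    ∀ x : ℝ, exp (-(h * x)) * τ x = (2 * π * I)⁻¹ *
      contourIntegralGamma (fun ζ => F (ζ + h) * exp (ζ * x)) h α' r' := by
  have hF_strip := differentiableOn_comp_add_ofReal hF
  have hF_rect := hF_strip.mono (s := Icc α' (-h) ×ℂ Icc (-r') r')
    (inter_subset_inter_left _ (preimage_mono Icc_subset_Ici_self))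
  have hhalf (s : ℂ) (hs : -h < s.re) :=
    eq_contourIntegralGamma_of_neg_lt_re hsupp hcont hint hfourier hFeq hF_rect hα' hr' hs
  have hline : Integrable fun t : ℝ => F (cpt (-h) t + h) := by
    simpa only [apply_cpt_neg_add_eq_laplace hFeq] using integrable_laplace_mul_I hsupp hfourier
  exact ⟨fun s hs => hs.elim (hhalf s)
      (eq_contourIntegralGamma_of_mem_strip hα' hF_strip hline hhalf),
    exp_mul_eq_contourIntegralGamma hsupp hcont hint hfourier hFeq hF_rect hα' hr'⟩

end ShiftedTransform

end

/-- Cauchy-type integral representation along `Γ_h`: for a Schwartz function `τ`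
supported in `[0,∞)` whose Laplace transform has an analytic extension `F` to
(a neighborhood of `R̄_{α',r'}`) ∪ {Re s > 0}, continuous up to `{Re s ≥ 0}`, and
for `0 < h < −α'`, the extension `F_h(s) = F(s+h)` of `L{τ_h;·}` satisfies
`F_h(s) = (1/2πi) ∫_{Γ_h} F_h(ζ)/(s−ζ) dζ` for all `s` with `Re s > 0` or
`s ∈ R̄_{α,r}`, and consequently
`τ_h(x) = (1/2πi) ∫_{Γ_h} F_h(ζ) e^{ζx} dζ` for all `x ≥ 0`. -/
theorem contour_integral_representation
    (β α' α r r' : ℝ) (hβ : β < α') (hα' : α' < α) (hα : α < 0)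
    (hr : 0 < r) (hr' : r < r')
    (τ : SchwartzMap ℝ ℂ) (hsupp : ∀ x : ℝ, x < 0 → τ x = 0)
    (U : Set ℂ) (hU : IsOpen U) (hUR : Rbar α' r' ⊆ U)
    (F : ℂ → ℂ)
    (hFan : DifferentiableOn ℂ F (U ∪ {s : ℂ | 0 < s.re}))
    (hFcont : ContinuousOn F (U ∪ {s : ℂ | 0 ≤ s.re}))
    (hFeq : ∀ s : ℂ, 0 ≤ s.re → F s = Laplace (⇑τ) s)
    (h : ℝ) (hh0 : 0 < h) (hhα' : h < -α') :
    (∀ s : ℂ, 0 < s.re ∨ s ∈ Rbar α r →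
      F (s + (h : ℂ)) =
        (2 * Real.pi * Complex.I)⁻¹ *
          contourIntegralGamma (fun ζ : ℂ => F (ζ + (h : ℂ)) / (s - ζ)) h α' r') ∧
    (∀ x : ℝ, 0 ≤ x →
      Complex.exp (-((h : ℂ) * (x : ℂ))) * τ x =
        (2 * Real.pi * Complex.I)⁻¹ *
          contourIntegralGamma
            (fun ζ : ℂ => F (ζ + (h : ℂ)) * Complex.exp (ζ * (x : ℂ))) h α' r') := by
  obtain ⟨hF, hτ⟩ := contour_integral_representation_general hsupp τ.continuous τ.integrable
    (SchwartzMap.fourier_coe τ ▸ (FourierTransform.fourier τ).integrable) hFeq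
    (hFan.mono (reProdIm_subset_union_re_pos hUR (le_add_of_nonneg_right hh0.le)))
    (le_neg_of_le_neg hhα'.le) (hr.trans hr').le
  exact ⟨fun s hs => hF s (hs.imp (fun hre => by linarith) (Rbar_subset_reProdIm hα' hr' ·)),
    fun x _ => hτ x⟩
end
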